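/- arXiv:2511.15360 — 3 statements merged into one kernel-verified Lean document; each statement's English description precedes it below -/
import Mathlib

section
/- In the Euclidean direct-search setting, assuming the update rules and the lower bound f(x) ≥ flow for all x ∈ ℝᵐ (no smoothness or polling-quality assumption needed), the series Σ_{k=0}^∞ α_k² converges. -/
/-!
The potential `Φ k = f (x k) + M * (α k)^2` with `M = b / (2 γinc²)`, `b = c / 2 * Dmin²`, drops by
at least a fixed multiple of `(α k)^2` at every iteration. On a success `f` drops by at least
`b * (α k)^2`, while the second term grows by at most `b / 2 * (α k)^2`; on a failure `f` is
unchanged and the second term drops by `M * (1 - γdec²) * (α k)^2`. As `Φ` is bounded below by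
`flow`, telescoping bounds the partial sums of `(α k)^2`.
-/

/-- The Euclidean direct-search setting: a function `f : ℝᵐ → ℝ`, algorithmic parameters,
iterates `x k`, step sizes `α k`, polling sets `Dpoll k` with norms in `[Dmin, Dmax]`, and
a set `S` of successful iterations, together with the direct-search update rules. -/
structure DirectSearch (m : ℕ) where
  /-- Objective function. -/
  f : EuclideanSpace ℝ (Fin m) → ℝ
  αmax : ℝ
  c : ℝ
  γdec : ℝ
  γinc : ℝ
  Dmin : ℝ
  Dmax : ℝ
  /-- Iterates. -/
  x : ℕ → EuclideanSpace ℝ (Fin m)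
  /-- Step sizes. -/
  α : ℕ → ℝ
  /-- Polling sets. -/
  Dpoll : ℕ → Finset (EuclideanSpace ℝ (Fin m))
  /-- Successful iterations. -/
  S : Set ℕ
  hαmax : 0 < αmax
  hc : 0 < c
  hγdec₀ : 0 < γdec
  hγdec₁ : γdec < 1
  hγinc : 1 < γinc
  hDmin : 0 < Dmin
  hDminmax : Dmin ≤ Dmax
  hα₀ : 0 < α 0
  hα₀max : α 0 ≤ αmax
  hDnorm : ∀ k, ∀ d ∈ Dpoll k, Dmin ≤ ‖d‖ ∧ ‖d‖ ≤ Dmax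
  hsucc : ∀ k ∈ S, ∃ d ∈ Dpoll k,
    f (x k + α k • d) < f (x k) - c / 2 * (α k) ^ 2 * ‖d‖ ^ 2 ∧
    x (k + 1) = x k + α k • d ∧ α (k + 1) = min (γinc * α k) αmax
  hfail : ∀ k ∉ S,
    (∀ d ∈ Dpoll k, f (x k + α k • d) ≥ f (x k) - c / 2 * (α k) ^ 2 * ‖d‖ ^ 2) ∧
    x (k + 1) = x k ∧ α (k + 1) = γdec * α k

theorem DirectSearch.alpha_pos {m : ℕ} (A : DirectSearch m) (k : ℕ) : 0 < A.α k := by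
  induction k with
  | zero => exact A.hα₀
  | succ k ih =>
    by_cases hk : k ∈ A.S
    · obtain ⟨d, -, -, -, h⟩ := A.hsucc k hk
      rw [h]
      exact lt_min (mul_pos (one_pos.trans A.hγinc) ih) A.hαmax
    · rw [(A.hfail k hk).2.2]
      exact mul_pos A.hγdec₀ ih

/-- Sufficient decrease of the potential `f (x k) + M * (α k)^2`, uniformly over successful and
unsuccessful iterations. -/
theorem DirectSearch.exists_potential_decrease {m : ℕ} (A : DirectSearch m) :
    ∃ M δ : ℝ, 0 < M ∧ 0 < δ ∧ ∀ k,
      A.f (A.x (k + 1)) + M * A.α (k + 1) ^ 2 + δ * A.α k ^ 2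
        ≤ A.f (A.x k) + M * A.α k ^ 2 := by
  have hg : 0 < A.γinc := one_pos.trans A.hγinc
  obtain ⟨b, hb⟩ : ∃ b, b = A.c / 2 * A.Dmin ^ 2 := ⟨_, rfl⟩
  have hb0 : 0 < b := by
    rw [hb]
    have := A.hc
    have := A.hDmin
    positivity
  obtain ⟨M, hM⟩ : ∃ M, M = b / (2 * A.γinc ^ 2) := ⟨_, rfl⟩
  have hM0 : 0 < M := by rw [hM]; positivity
  have hMg : M * A.γinc ^ 2 = b / 2 := by rw [hM]; field_simp
  have hdec : 0 < 1 - A.γdec ^ 2 := by nlinarith [A.hγdec₀, A.hγdec₁]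
  refine ⟨M, min (b / 2) (M * (1 - A.γdec ^ 2)), hM0,
    lt_min (by positivity) (mul_pos hM0 hdec), fun k => ?_⟩
  have hα := A.alpha_pos k
  by_cases hk : k ∈ A.S
  · obtain ⟨d, hd, hf, hx, ha⟩ := A.hsucc k hk
    have h1 : A.α (k + 1) ^ 2 ≤ (A.γinc * A.α k) ^ 2 :=
      pow_le_pow_left₀ (A.alpha_pos _).le (ha ▸ min_le_left _ _) 2
    have h2 : M * A.α (k + 1) ^ 2 ≤ b / 2 * A.α k ^ 2 := by
      calc M * A.α (k + 1) ^ 2 ≤ M * (A.γinc * A.α k) ^ 2 := by gcongr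
        _ = M * A.γinc ^ 2 * A.α k ^ 2 := by ring
        _ = b / 2 * A.α k ^ 2 := by rw [hMg]
    have h3 : b * A.α k ^ 2 ≤ A.c / 2 * A.α k ^ 2 * ‖d‖ ^ 2 := by
      have h4 : A.Dmin ^ 2 ≤ ‖d‖ ^ 2 :=
        pow_le_pow_left₀ A.hDmin.le (A.hDnorm k d hd).1 2
      have hc := A.hc
      calc b * A.α k ^ 2 = A.c / 2 * A.α k ^ 2 * A.Dmin ^ 2 := by rw [hb]; ring
        _ ≤ _ := by gcongr
    have h5 : min (b / 2) (M * (1 - A.γdec ^ 2)) * A.α k ^ 2 ≤ b / 2 * A.α k ^ 2 := by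
      gcongr
      exact min_le_left _ _
    have h6 : 0 ≤ M * A.α k ^ 2 := by positivity
    rw [hx]
    linarith
  · obtain ⟨-, hx, ha⟩ := A.hfail k hk
    have h5 : min (b / 2) (M * (1 - A.γdec ^ 2)) * A.α k ^ 2
        ≤ M * (1 - A.γdec ^ 2) * A.α k ^ 2 := by
      gcongr
      exact min_le_right _ _
    rw [hx, ha]
    linarith

/-- In the direct-search setting, if `f` is bounded below then `Σ α_k²` converges. -/
theorem stmt12 (m : ℕ) (hm : 1 ≤ m) (A : DirectSearch m) (flow : ℝ)
    (hflow : ∀ y, A.f y ≥ flow) :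
    Summable fun k => (A.α k) ^ 2 := by
  obtain ⟨M, δ, hM, hδ, h⟩ := A.exists_potential_decrease
  have key : ∀ n, δ * ∑ k ∈ Finset.range n, A.α k ^ 2 + (A.f (A.x n) + M * A.α n ^ 2)
      ≤ A.f (A.x 0) + M * A.α 0 ^ 2 := by
    intro n
    induction n with
    | zero => simp
    | succ n ih =>
      rw [Finset.sum_range_succ, mul_add]
      linarith [h n]
  refine summable_of_sum_range_le (c := (A.f (A.x 0) + M * A.α 0 ^ 2 - flow) / δ)
    (fun k => sq_nonneg _) fun n => ?_
  rw [le_div_iff₀' hδ]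
  have h1 : 0 ≤ M * A.α n ^ 2 := by positivity
  linarith [key n, hflow (A.x n)]
end

section
/- In the Euclidean direct-search setting, assuming the update rules and the lower bound f(x) ≥ flow for all x ∈ ℝᵐ, the step sizes satisfy α_k → 0 as k → ∞, and the set ℕ \ S of unsuccessful iterations is infinite. -/
namespace DirectSearch

variable {m : ℕ} (A : DirectSearch m)

lemma α_pos (k : ℕ) : 0 < A.α k := by
  induction k with
  | zero => exact A.hα₀
  | succ k ih =>
    by_cases hk : k ∈ A.S
    · obtain ⟨d, -, -, -, h⟩ := A.hsucc k hk
      rw [h]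
      exact lt_min (mul_pos (zero_lt_one.trans A.hγinc) ih) A.hαmax
    · rw [(A.hfail k hk).2.2]
      exact mul_pos A.hγdec₀ ih

lemma α_le_αmax (k : ℕ) : A.α k ≤ A.αmax := by
  induction k with
  | zero => exact A.hα₀max
  | succ k ih =>
    by_cases hk : k ∈ A.S
    · obtain ⟨d, -, -, -, h⟩ := A.hsucc k hk
      rw [h]
      exact min_le_right _ _
    · rw [(A.hfail k hk).2.2]
      exact (mul_le_of_le_one_left (A.α_pos k).le A.hγdec₁.le).trans ih

lemma α_le_succ_of_mem {k : ℕ} (hk : k ∈ A.S) : A.α k ≤ A.α (k + 1) := by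
  obtain ⟨d, -, -, -, h⟩ := A.hsucc k hk
  rw [h]
  exact le_min (le_mul_of_one_le_left (A.α_pos k).le A.hγinc.le) (A.α_le_αmax k)

/-- Penalizing `f` by a small multiple of the squared step size gives a merit function that
decreases sufficiently at every iteration, not only at the successful ones. -/
lemma exists_merit_decrease : ∃ η > 0, ∃ δ > 0, ∀ k,
    A.f (A.x (k + 1)) + η * A.α (k + 1) ^ 2 + δ * A.α k ^ 2
      ≤ A.f (A.x k) + η * A.α k ^ 2 := by
  have hc := A.hc
  have hD := A.hDmin
  have hinc : 0 < A.γinc ^ 2 - 1 := by nlinarith [A.hγinc]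
  have hdec : 0 < 1 - A.γdec ^ 2 := by nlinarith [A.hγdec₀, A.hγdec₁]
  -- With this `η`, the growth of the penalty in a successful step, at most
  -- `η * (γinc ^ 2 - 1) * α k ^ 2`, uses up only half of the guaranteed decrease of `f`.
  obtain ⟨η, hη, hηeq⟩ : ∃ η > 0, η * (A.γinc ^ 2 - 1) = A.c * A.Dmin ^ 2 / 4 :=
    ⟨A.c * A.Dmin ^ 2 / 4 / (A.γinc ^ 2 - 1), by positivity, div_mul_cancel₀ _ hinc.ne'⟩
  refine ⟨η, hη, min (A.c * A.Dmin ^ 2 / 4) (η * (1 - A.γdec ^ 2)),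
    lt_min (by positivity) (by positivity), fun k => ?_⟩
  by_cases hk : k ∈ A.S
  · obtain ⟨d, hd, hf, hx, hα⟩ := A.hsucc k hk
    rw [← hx] at hf
    have hdesc : A.c / 2 * A.α k ^ 2 * A.Dmin ^ 2 ≤ A.c / 2 * A.α k ^ 2 * ‖d‖ ^ 2 := by
      have := (A.hDnorm k d hd).1
      gcongr
    have hgrow : η * A.α (k + 1) ^ 2 ≤ η * (A.γinc * A.α k) ^ 2 := by
      have := (A.α_pos (k + 1)).le
      have : A.α (k + 1) ≤ A.γinc * A.α k := hα ▸ min_le_left _ _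
      gcongr
    have hδ := mul_le_mul_of_nonneg_right
      (min_le_left (A.c * A.Dmin ^ 2 / 4) (η * (1 - A.γdec ^ 2))) (sq_nonneg (A.α k))
    linear_combination hf + hdesc + hgrow + hδ + A.α k ^ 2 * hηeq
  · obtain ⟨-, hx, hα⟩ := A.hfail k hk
    have hδ := mul_le_mul_of_nonneg_right
      (min_le_right (A.c * A.Dmin ^ 2 / 4) (η * (1 - A.γdec ^ 2))) (sq_nonneg (A.α k))
    rw [hx, hα]
    linear_combination hδ

lemma tendsto_α {flow : ℝ} (hflow : ∀ y, A.f y ≥ flow) :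
    Filter.Tendsto A.α Filter.atTop (nhds 0) := by
  obtain ⟨η, hη, δ, hδ, hdecr⟩ := A.exists_merit_decrease
  have hsum : ∀ n, δ * ∑ k ∈ Finset.range n, A.α k ^ 2
      ≤ A.f (A.x 0) + η * A.α 0 ^ 2 - (A.f (A.x n) + η * A.α n ^ 2) := by
    intro n
    induction n with
    | zero => simp
    | succ n ih =>
      rw [Finset.sum_range_succ]
      linear_combination ih + hdecr n
  have hsummable : Summable fun k => A.α k ^ 2 := by
    refine summable_of_sum_range_le (c := (A.f (A.x 0) + η * A.α 0 ^ 2 - flow) / δ)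
      (fun k => sq_nonneg _) fun n => ?_
    rw [le_div_iff₀' hδ]
    have : 0 ≤ η * A.α n ^ 2 := by positivity
    linarith [hsum n, hflow (A.x n)]
  have hsqrt := hsummable.tendsto_atTop_zero.sqrt
  rw [Real.sqrt_zero] at hsqrt
  exact hsqrt.congr fun k => Real.sqrt_sq (A.α_pos k).le

lemma infinite_unsuccessful (hα : Filter.Tendsto A.α Filter.atTop (nhds 0)) :
    {k : ℕ | k ∉ A.S}.Infinite := by
  intro hfin
  obtain ⟨N, hN⟩ := hfin.bddAbove
  have hmem : ∀ k, N + 1 ≤ k → k ∈ A.S := fun k hk => by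
    by_contra h
    have : k ≤ N := hN h
    omega
  have hle : ∀ k, N + 1 ≤ k → A.α (N + 1) ≤ A.α k := fun k hk => by
    induction k, hk using Nat.le_induction with
    | base => exact le_rfl
    | succ k hk ih => exact ih.trans (A.α_le_succ_of_mem (hmem k hk))
  exact (A.α_pos (N + 1)).not_ge
    (ge_of_tendsto hα (Filter.eventually_atTop.2 ⟨N + 1, hle⟩))

end DirectSearch

/-- In the direct-search setting, if `f` is bounded below then `α_k → 0` and there are
infinitely many unsuccessful iterations. -/
theorem stmt13 (m : ℕ) (hm : 1 ≤ m) (A : DirectSearch m) (flow : ℝ)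
    (hflow : ∀ y, A.f y ≥ flow) :
    Filter.Tendsto A.α Filter.atTop (nhds 0) ∧ {k : ℕ | k ∉ A.S}.Infinite := by
  have hα := A.tendsto_α hflow
  exact ⟨hα, A.infinite_unsuccessful hα⟩
end

section
/- In the Euclidean direct-search setting, assuming the update rules and the lower bound f(x) ≥ flow for all x ∈ ℝᵐ, let k₀ ∈ ℕ be such that every iteration k < k₀ is successful (k ∈ S for all k < k₀). Then k₀ ≤ 2(f(x₀) − flow)/(c·α₀²·Dmin²). -/
/-- After `k` consecutive successful iterations from the start, the step size is at least the
initial one and the sufficient decreases have accumulated linearly in `k`. -/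
theorem DirectSearch.run_bounds {m : ℕ} (A : DirectSearch m) (k : ℕ) (hk : ∀ j < k, j ∈ A.S) :
    A.α 0 ≤ A.α k ∧
      A.f (A.x k) ≤ A.f (A.x 0) - k * (A.c / 2 * A.α 0 ^ 2 * A.Dmin ^ 2) := by
  induction k with
  | zero => simp
  | succ k ih =>
    obtain ⟨hα, hf⟩ := ih fun j hj => hk j (by omega)
    obtain ⟨d, hd, hdec, hx, hαs⟩ := A.hsucc k (hk k (by omega))
    have hα₀ := A.hα₀
    have hc := A.hc
    have hDmin := A.hDmin
    have hdn := (A.hDnorm k d hd).1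
    refine ⟨?_, ?_⟩
    · rw [hαs]
      refine le_min ?_ A.hα₀max
      nlinarith [A.hγinc]
    · have hstep : A.c / 2 * A.α 0 ^ 2 * A.Dmin ^ 2 ≤ A.c / 2 * A.α k ^ 2 * ‖d‖ ^ 2 := by
        gcongr
      rw [hx]
      push_cast
      linarith

/-- If every iteration before `k₀` is successful, then
`k₀ ≤ 2(f(x₀) − flow)/(c·α₀²·Dmin²)`. -/
theorem stmt14 (m : ℕ) (hm : 1 ≤ m) (A : DirectSearch m) (flow : ℝ)
    (hflow : ∀ y, A.f y ≥ flow) (k₀ : ℕ) (hk₀ : ∀ k < k₀, k ∈ A.S) :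
    (k₀ : ℝ) ≤ 2 * (A.f (A.x 0) - flow) / (A.c * (A.α 0) ^ 2 * A.Dmin ^ 2) := by
  have hα₀ := A.hα₀
  have hc := A.hc
  have hDmin := A.hDmin
  rw [le_div_iff₀ (by positivity)]
  linarith [(A.run_bounds k₀ hk₀).2, hflow (A.x k₀)]
end
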